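/- Let k be a field and n a natural number. For every homogeneous polynomial p of degree 2 in the variables X_0,…,X_n over k there exists a k-linear functional φ on the second exterior power ⋀²(k^{n+1} × k^{n+1}) such that p(v) = φ((v,0) ∧ (0,v)) for every v ∈ k^{n+1}. -/

import Mathlib

/-- The wedge `x ∧ y` of two vectors, as an element of the second exterior power
`⋀[k]^2 M` (viewed as a submodule of the exterior algebra). -/
noncomputable def wedgePair (k : Type*) [Field k] {M : Type*} [AddCommGroup M] [Module k M]
    (x y : M) : ⋀[k]^2 M :=
  ⟨ExteriorAlgebra.ιMulti k 2 ![x, y],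
    ExteriorAlgebra.ιMulti_range k 2 (Set.mem_range_self ![x, y])⟩

/-! A quadric is the restriction to the diagonal of a (not necessarily symmetric) bilinear form `B`:
write each monomial as `X i * X j` and take `B v w = v i * w j`. The bilinear form
`(a, b), (c, d) ↦ B a d` on `M × M` antisymmetrizes to a functional on `⋀²(M × M)` with value
`B v w - B 0 0 = B v w` on `(v, 0) ∧ (0, w)`. Since `B` need not be symmetrized, characteristic two
plays no special role. -/

section Antisymmetrization

variable {R M N P : Type*} [CommRing R] [AddCommGroup M] [Module R M] [AddCommGroup N] [Module R N]
  [AddCommGroup P] [Module R P]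

/-- The antisymmetrization `x ∧ y ↦ C x y - C y x` of a bilinear map `C`, as a linear map on the
second exterior power. There is no factor `1 / 2`, so that `2` need not be invertible. -/
noncomputable def antisymmetrization (C : M →ₗ[R] M →ₗ[R] P) : ⋀[R]^2 M →ₗ[R] P :=
  exteriorPower.alternatingMapLinearEquiv <| MultilinearMap.alternatization <|
    LinearMap.uncurryLeft (MultilinearMap.ofSubsingletonₗ R R M P (0 : Fin 1) ∘ₗ C)

theorem antisymmetrization_ιMulti (C : M →ₗ[R] M →ₗ[R] P) (x y : M) :
    antisymmetrization C (exteriorPower.ιMulti R 2 ![x, y]) = C x y - C y x := by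
  have univ_perm : (Finset.univ : Finset (Equiv.Perm (Fin 2))) = {1, Equiv.swap 0 1} := by decide
  have one_ne_swap : (1 : Equiv.Perm (Fin 2)) ≠ Equiv.swap 0 1 := by decide
  simp [antisymmetrization, MultilinearMap.alternatization_apply, univ_perm,
    Finset.sum_pair one_ne_swap, Fin.tail, sub_eq_add_neg]

theorem antisymmetrization_compl₁₂_fst_snd (B : M →ₗ[R] N →ₗ[R] P) (x : M) (y : N) :
    antisymmetrization (B.compl₁₂ (LinearMap.fst R M N) (LinearMap.snd R M N))
      (exteriorPower.ιMulti R 2 ![(x, 0), (0, y)]) = B x y := by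
  simp [antisymmetrization_ιMulti]

end Antisymmetrization

section Quadric

open MvPolynomial

variable {R σ : Type*} [CommSemiring R]

theorem homogeneousSubmodule_two_eq_span_X_mul_X :
    homogeneousSubmodule σ R 2 = Submodule.span R (Set.range fun ij : σ × σ ↦ X ij.1 * X ij.2) := by
  rw [← homogeneousSubmodule_one_pow, pow_two, homogeneousSubmodule_one_eq_span_X,
    Submodule.mul_eq_map₂, Submodule.map₂_span_span, Set.image2_range]
  rfl

theorem exists_bilinForm_apply_self_eq_eval {p : MvPolynomial σ R} (hp : p.IsHomogeneous 2) :
    ∃ B : LinearMap.BilinForm R (σ → R), ∀ v, B v v = eval v p := by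
  rw [← mem_homogeneousSubmodule, homogeneousSubmodule_two_eq_span_X_mul_X] at hp
  induction hp using Submodule.span_induction with
  | mem q hq =>
    obtain ⟨⟨i, j⟩, rfl⟩ := hq
    exact ⟨.linMulLin (.proj i) (.proj j), fun v ↦ by simp⟩
  | zero => exact ⟨0, fun v ↦ by simp⟩
  | add q r _ _ hq hr =>
    obtain ⟨B, hB⟩ := hq
    obtain ⟨B', hB'⟩ := hr
    exact ⟨B + B', fun v ↦ by simp [hB, hB']⟩
  | smul c q _ hq =>
    obtain ⟨B, hB⟩ := hq
    exact ⟨c • B, fun v ↦ by simp [hB]⟩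

end Quadric

theorem quadric_is_pluecker_pullback_general {R σ : Type*} [CommRing R] {p : MvPolynomial σ R}
    (hp : p.IsHomogeneous 2) :
    ∃ φ : ⋀[R]^2 ((σ → R) × (σ → R)) →ₗ[R] R,
      ∀ v : σ → R, MvPolynomial.eval v p = φ (exteriorPower.ιMulti R 2 ![(v, 0), (0, v)]) := by
  obtain ⟨B, hB⟩ := exists_bilinForm_apply_self_eq_eval hp
  exact ⟨antisymmetrization (B.compl₁₂ (.fst R _ _) (.snd R _ _)), fun v ↦ by
    rw [antisymmetrization_compl₁₂_fst_snd, hB]⟩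

/-- Completeness of the linear system: every homogeneous polynomial `p` of degree 2 in
`X_0, …, X_n` arises by pulling back some linear functional on `⋀²(k^{n+1} × k^{n+1})`
along `v ↦ (v,0) ∧ (0,v)`. -/
theorem quadric_is_pluecker_pullback (k : Type*) [Field k] (n : ℕ)
    (p : MvPolynomial (Fin (n + 1)) k)
    (hp : p ∈ MvPolynomial.homogeneousSubmodule (Fin (n + 1)) k 2) :
    ∃ φ : ⋀[k]^2 ((Fin (n + 1) → k) × (Fin (n + 1) → k)) →ₗ[k] k,
      ∀ v : Fin (n + 1) → k,
        MvPolynomial.eval v p =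
          φ (wedgePair k ((v, 0) : (Fin (n + 1) → k) × (Fin (n + 1) → k)) (0, v)) :=
  quadric_is_pluecker_pullback_general ((MvPolynomial.mem_homogeneousSubmodule 2 p).mp hp)
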